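/- Let n be a positive integer and V = (ℤ/nℤ)⁴. Let (W₁, W₂) be a pair of subgroups of V, each isomorphic to (ℤ/nℤ)², with ⟨w₁, w₂⟩ = 0 for all w₁ ∈ W₁, w₂ ∈ W₂, and W₁ + W₂ = V. Let W₁⁰ = span of e₁ = (1,0,0,0) and e₃ = (0,0,1,0), and W₂⁰ = span of e₂ = (0,1,0,0) and e₄ = (0,0,0,1). Then there exists g ∈ Sp(4, ℤ/nℤ) with g·W₁⁰ = W₁ and g·W₂⁰ = W₂. -/

import Mathlib

/-!
Generators `a, b` of `W₁` and `c, d` of `W₂` together span `V`, so the matrix `M` with columns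
`a, c, b, d` defines a surjective, hence invertible, endomorphism. Therefore the Gram matrix
`Mᵀ J M` is invertible; as `W₁ ⟂ W₂`, its only nonzero entries are `±⟨a, b⟩` and `±⟨c, d⟩`, which
must then be units. Rescaling `b` and `d` makes both equal to `1` without changing the spans, and
the matrix with the rescaled columns is the required symplectic `g`.
-/



open Matrix

/-- `V n = (ℤ/nℤ)⁴`, with coordinates indexed so that `Sum.inl 0, Sum.inl 1, Sum.inr 0, Sum.inr 1`
correspond to the coordinates `x₁, x₂, x₃, x₄`. -/
abbrev V (n : ℕ) : Type := (Fin 2 ⊕ Fin 2) → ZMod n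

/-- `Sp(4, ℤ/nℤ)`. -/
abbrev Sp4 (n : ℕ) := Matrix.symplecticGroup (Fin 2) (ZMod n)

/-- The standard symplectic form `⟨x,y⟩ = x₁y₃ + x₂y₄ − x₃y₁ − x₄y₂`. -/
def sForm {n : ℕ} (x y : V n) : ZMod n :=
  x (Sum.inl 0) * y (Sum.inr 0) + x (Sum.inl 1) * y (Sum.inr 1)
    - x (Sum.inr 0) * y (Sum.inl 0) - x (Sum.inr 1) * y (Sum.inl 1)

/-- `W₁⁰`, the span of `e₁ = (1,0,0,0)` and `e₃ = (0,0,1,0)`. -/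
def W10 (n : ℕ) : AddSubgroup (V n) where
  carrier := {x | x (Sum.inl 1) = 0 ∧ x (Sum.inr 1) = 0}
  add_mem' hx hy := by constructor <;> simp_all
  zero_mem' := ⟨rfl, rfl⟩
  neg_mem' hx := by constructor <;> simp_all

/-- `W₂⁰`, the span of `e₂ = (0,1,0,0)` and `e₄ = (0,0,0,1)`. -/
def W20 (n : ℕ) : AddSubgroup (V n) where
  carrier := {x | x (Sum.inl 0) = 0 ∧ x (Sum.inr 0) = 0}
  add_mem' hx hy := by constructor <;> simp_all
  zero_mem' := ⟨rfl, rfl⟩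
  neg_mem' hx := by constructor <;> simp_all

/-- A subgroup isomorphic to `(ℤ/nℤ)²` is the `ℤ/nℤ`-span of two vectors. -/
lemma exists_generators {n : ℕ} (W : AddSubgroup (V n))
    (h : Nonempty (W ≃+ (ZMod n × ZMod n))) :
    ∃ a b : V n, ∀ w, w ∈ W ↔ ∃ x y : ZMod n, x • a + y • b = w := by
  obtain ⟨φ⟩ := h
  let f : ZMod n × ZMod n →+ V n := W.subtype.comp φ.symm.toAddMonoidHom
  have hf : ∀ x y : ZMod n, x • f (1, 0) + y • f (0, 1) = f (x, y) := by
    intro x y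
    rw [← ZMod.map_smul f, ← ZMod.map_smul f, ← map_add]
    simp
  refine ⟨f (1, 0), f (0, 1), fun w => ⟨fun hw => ?_, ?_⟩⟩
  · refine ⟨(φ ⟨w, hw⟩).1, (φ ⟨w, hw⟩).2, ?_⟩
    rw [hf]
    simp [f]
  · rintro ⟨x, y, rfl⟩
    rw [hf]
    exact (φ.symm (x, y)).2

/-- The matrix with columns `a, c, b, d`, in the order of the coordinates `x₁, x₂, x₃, x₄`. -/
def colMatrix {n : ℕ} (a b c d : V n) : Matrix (Fin 2 ⊕ Fin 2) (Fin 2 ⊕ Fin 2) (ZMod n) :=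
  Matrix.of fun i j => Sum.elim ![a i, c i] ![b i, d i] j

lemma colMatrix_mulVec {n : ℕ} (a b c d x : V n) :
    (colMatrix a b c d).mulVec x =
      (x (Sum.inl 0) • a + x (Sum.inr 0) • b) + (x (Sum.inl 1) • c + x (Sum.inr 1) • d) := by
  ext i
  simp [colMatrix, Matrix.mulVec, dotProduct, Fin.sum_univ_two]
  ring

/-- The Gram matrix of two orthogonal pairs `(a, b)` and `(c, d)`; the signs come from the matrix
`J` representing the form `-sForm`. -/
lemma gram {n : ℕ} (a b c d : V n) (hac : sForm a c = 0) (had : sForm a d = 0)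
    (hbc : sForm b c = 0) (hbd : sForm b d = 0) :
    (colMatrix a b c d)ᵀ * Matrix.J (Fin 2) (ZMod n) * colMatrix a b c d =
      Matrix.fromBlocks 0 (Matrix.diagonal ![-sForm a b, -sForm c d])
        (Matrix.diagonal ![sForm a b, sForm c d]) 0 := by
  unfold sForm at *
  ext i j
  rcases i with i | i <;> rcases j with j | j <;> fin_cases i <;> fin_cases j <;>
    simp [colMatrix, Matrix.mul_apply, Matrix.J, Fin.sum_univ_two, Matrix.one_apply] <;> grind

lemma isUnit_sForm {n : ℕ} (a b c d : V n) (hac : sForm a c = 0) (had : sForm a d = 0)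
    (hbc : sForm b c = 0) (hbd : sForm b d = 0)
    (hs : Function.Surjective (colMatrix a b c d).mulVec) :
    IsUnit (sForm a b) ∧ IsUnit (sForm c d) := by
  have hM : IsUnit (colMatrix a b c d) := Matrix.mulVec_surjective_iff_isUnit.mp hs
  have hJ : IsUnit (Matrix.J (Fin 2) (ZMod n)) :=
    (Matrix.isUnit_iff_isUnit_det _).mpr (Matrix.isUnit_det_J _ _)
  have hG := (((Matrix.isUnit_transpose _).mpr hM).mul hJ).mul hM
  rw [gram a b c d hac had hbc hbd] at hG
  obtain ⟨N, hN⟩ := hG.exists_right_inv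
  have e0 := congrFun (congrFun hN (Sum.inr 0)) (Sum.inr 0)
  have e1 := congrFun (congrFun hN (Sum.inr 1)) (Sum.inr 1)
  simp [Matrix.mul_apply, Matrix.fromBlocks, Fin.sum_univ_two] at e0 e1
  exact ⟨IsUnit.of_mul_eq_one _ e0, IsUnit.of_mul_eq_one _ e1⟩

lemma sForm_smul_left {n : ℕ} (u : ZMod n) (x y : V n) : sForm (u • x) y = u * sForm x y := by
  simp [sForm]; ring

lemma sForm_smul_right {n : ℕ} (u : ZMod n) (x y : V n) : sForm x (u • y) = u * sForm x y := by
  simp [sForm]; ring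

/-- Scaling the second generator by a unit does not change the span. -/
lemma span_rescale {n : ℕ} {W : AddSubgroup (V n)} {a b : V n}
    (h : ∀ w, w ∈ W ↔ ∃ x y : ZMod n, x • a + y • b = w) (u : (ZMod n)ˣ) (w : V n) :
    w ∈ W ↔ ∃ x y : ZMod n, x • a + y • ((u : ZMod n) • b) = w := by
  rw [h]
  constructor
  · rintro ⟨x, y, rfl⟩
    exact ⟨x, y * (u⁻¹ : (ZMod n)ˣ), by simp [smul_smul, mul_assoc]⟩
  · rintro ⟨x, y, rfl⟩
    exact ⟨x, y * u, by simp [smul_smul]⟩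

theorem statement12 (n : ℕ) (hn : 0 < n) (W₁ W₂ : AddSubgroup (V n))
    (h1 : Nonempty (W₁ ≃+ (ZMod n × ZMod n)))
    (h2 : Nonempty (W₂ ≃+ (ZMod n × ZMod n)))
    (horth : ∀ w₁ ∈ W₁, ∀ w₂ ∈ W₂, sForm w₁ w₂ = 0)
    (hsup : W₁ ⊔ W₂ = ⊤) :
    ∃ g : ↥(Sp4 n),
      (fun x : V n => (g : Matrix (Fin 2 ⊕ Fin 2) (Fin 2 ⊕ Fin 2) (ZMod n)).mulVec x) ''
        (W10 n : Set (V n)) = (W₁ : Set (V n)) ∧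
      (fun x : V n => (g : Matrix (Fin 2 ⊕ Fin 2) (Fin 2 ⊕ Fin 2) (ZMod n)).mulVec x) ''
        (W20 n : Set (V n)) = (W₂ : Set (V n)) := by
  obtain ⟨a, b, hab⟩ := exists_generators W₁ h1
  obtain ⟨c, d, hcd⟩ := exists_generators W₂ h2
  have ha : a ∈ W₁ := (hab a).2 ⟨1, 0, by simp⟩
  have hb : b ∈ W₁ := (hab b).2 ⟨0, 1, by simp⟩
  have hc : c ∈ W₂ := (hcd c).2 ⟨1, 0, by simp⟩
  have hd : d ∈ W₂ := (hcd d).2 ⟨0, 1, by simp⟩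
  have hs : Function.Surjective (colMatrix a b c d).mulVec := by
    intro v
    have hv : v ∈ W₁ ⊔ W₂ := hsup ▸ AddSubgroup.mem_top v
    obtain ⟨w₁, hw₁, w₂, hw₂, rfl⟩ := AddSubgroup.mem_sup.mp hv
    obtain ⟨x, y, rfl⟩ := (hab w₁).1 hw₁
    obtain ⟨z, t, rfl⟩ := (hcd w₂).1 hw₂
    exact ⟨Sum.elim ![x, z] ![y, t], by simp [colMatrix_mulVec]⟩
  obtain ⟨⟨α, hα⟩, ⟨β, hβ⟩⟩ := isUnit_sForm a b c d (horth a ha c hc) (horth a ha d hd)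
    (horth b hb c hc) (horth b hb d hd) hs
  have hab' := span_rescale hab α⁻¹
  have hcd' := span_rescale hcd β⁻¹
  set b' : V n := ((α⁻¹ : (ZMod n)ˣ) : ZMod n) • b with hb'
  set d' : V n := ((β⁻¹ : (ZMod n)ˣ) : ZMod n) • d with hd'
  have hab1 : sForm a b' = 1 := by rw [hb', sForm_smul_right, ← hα]; simp
  have hcd1 : sForm c d' = 1 := by rw [hd', sForm_smul_right, ← hβ]; simp
  have hG := gram a b' c d' (horth a ha c hc)
    (by rw [hd', sForm_smul_right, horth a ha d hd, mul_zero])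
    (by rw [hb', sForm_smul_left, horth b hb c hc, mul_zero])
    (by rw [hb', hd', sForm_smul_left, sForm_smul_right, horth b hb d hd, mul_zero, mul_zero])
  have hg : colMatrix a b' c d' ∈ Matrix.symplecticGroup (Fin 2) (ZMod n) := by
    rw [SymplecticGroup.mem_iff', hG, hab1, hcd1]
    ext i j
    rcases i with i | i <;> rcases j with j | j <;> fin_cases i <;> fin_cases j <;>
      simp [Matrix.J]
  refine ⟨⟨_, hg⟩, ?_, ?_⟩
  · ext w
    rw [SetLike.mem_coe, hab' w]
    constructor
    · rintro ⟨x, ⟨hx1, hx2⟩, rfl⟩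
      exact ⟨x (Sum.inl 0), x (Sum.inr 0), by simp [colMatrix_mulVec, hx1, hx2]⟩
    · rintro ⟨x, y, rfl⟩
      exact ⟨Sum.elim ![x, 0] ![y, 0], ⟨rfl, rfl⟩, by simp [colMatrix_mulVec]⟩
  · ext w
    rw [SetLike.mem_coe, hcd' w]
    constructor
    · rintro ⟨x, ⟨hx1, hx2⟩, rfl⟩
      exact ⟨x (Sum.inl 1), x (Sum.inr 1), by simp [colMatrix_mulVec, hx1, hx2]⟩
    · rintro ⟨x, y, rfl⟩
      exact ⟨Sum.elim ![0, x] ![0, y], ⟨rfl, rfl⟩, by simp [colMatrix_mulVec]⟩
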